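/- Let C be a regular category and let X be an object with global support which admits pushouts of any two of its product projections (for any two product projections p, q of X, a pushout of p along q exists). Then X has the finite strict refinement property if and only if X is projection-coextensive. -/

import Mathlib

/-!
A product projection is an effective epimorphism as soon as its complementary factor is, stably,
an effective quotient of `1`; this holds for every projection out of a quotient of `X`. Consequently
a map `π₁ × π₂ : X = A₁ × A₂ → B₁ × B₂ = Y` of product diagrams built from projections consists of
two pushout squares: two generalized elements of `A₁` identified in `B₁` become, after pairing both
with the same element of `A₂`, elements of `X` identified in `Y`. So strict refinements are computed
by pushouts, and a refinement of two binary decompositions yields coextensivity.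

Conversely, coextensivity passes from `X` to its direct factors. A finite product diagram on `X` is
a binary one, with factors `A₀` and `R`, followed by a shorter product diagram on `R`; pushing out
along a projection of `X` preserves the binary part by coextensivity of `X`, and the shorter part by
induction, applied to the factor `R`. The pushouts of the projections of one decomposition along
those of another are then the required refinement.
-/

open CategoryTheory CategoryTheory.Limits

universe v u

variable {C : Type u} [Category.{v} C]

/-- `(p, q)` is a binary product diagram, exhibiting `X` as the product of `A` and `B`. -/
def IsBinaryProduct {X A B : C} (p : X ⟶ A) (q : X ⟶ B) : Prop :=
  Nonempty (IsLimit (BinaryFan.mk p q))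

/-- `p : X ⟶ A` is a product projection. -/
def IsProductProjection {X A : C} (p : X ⟶ A) : Prop :=
  ∃ (B : C) (q : X ⟶ B), IsBinaryProduct p q

/-- A pushout square whose two legs belong to the class `M`. -/
def IsMPushout (M : MorphismProperty C) {Z A B P : C}
    (f : Z ⟶ A) (g : Z ⟶ B) (a : A ⟶ P) (b : B ⟶ P) : Prop :=
  IsPushout f g a b ∧ M a ∧ M b

/-- `X` is an `M`-coextensive object. -/
structure MCoextensive (M : MorphismProperty C) (X : C) : Prop where
  pushout_exists : ∀ ⦃Y A : C⦄ (m : X ⟶ Y) (p : X ⟶ A), M m → IsProductProjection p →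
    ∃ (P : C) (a : A ⟶ P) (b : Y ⟶ P), IsMPushout M p m a b
  isBinaryProduct_iff : ∀ ⦃A₁ A₂ Y B₁ B₂ : C⦄ (π₁ : X ⟶ A₁) (π₂ : X ⟶ A₂)
    (f : X ⟶ Y) (p₁ : A₁ ⟶ B₁) (p₂ : A₂ ⟶ B₂) (π₁' : Y ⟶ B₁) (π₂' : Y ⟶ B₂),
    IsBinaryProduct π₁ π₂ → M f → M p₁ → M p₂ →
    π₁ ≫ p₁ = f ≫ π₁' → π₂ ≫ p₂ = f ≫ π₂' →
    (IsBinaryProduct π₁' π₂' ↔ (IsMPushout M π₁ f p₁ π₁' ∧ IsMPushout M π₂ f p₂ π₂'))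

/-- The class of product projections. -/
def projections (C : Type u) [Category.{v} C] : MorphismProperty C :=
  fun _ _ f => IsProductProjection f

/-- `X` is projection-coextensive. -/
def ProjectionCoextensive (X : C) : Prop := MCoextensive (projections C) X

/-- `f` is a regular epimorphism (a coequalizer of some parallel pair). -/
def IsRegularEpimorphism {X Y : C} (f : X ⟶ Y) : Prop :=
  ∃ (W : C) (a b : W ⟶ X) (h : a ≫ f = b ≫ f), Nonempty (IsColimit (Cofork.ofπ f h))

/-- The class of regular epimorphisms. -/
def regularEpis (C : Type u) [Category.{v} C] : MorphismProperty C :=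
  fun _ _ f => IsRegularEpimorphism f

/-- `X` is regularly-coextensive. -/
def RegularlyCoextensive (X : C) : Prop := MCoextensive (regularEpis C) X

/-- A regular category: finitely complete, coequalizers of kernel pairs, and
regular epimorphisms are stable under pullback. -/
class IsRegularCategory (C : Type u) [Category.{v} C] [HasFiniteLimits C] : Prop where
  hasCoequalizer_kernelPair : ∀ {X Y : C} (f : X ⟶ Y),
    HasCoequalizer (pullback.fst f f) (pullback.snd f f)
  regularEpi_stable : ∀ {X Y Z : C} (f : X ⟶ Y) (g : Z ⟶ Y),
    IsRegularEpimorphism f → IsRegularEpimorphism (pullback.snd f g)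

/-- `X` has global support: the unique morphism to the terminal object is a regular epi. -/
def HasGlobalSupport [HasTerminal C] (X : C) : Prop :=
  IsRegularEpimorphism (terminal.from X)

/-- `X` has the finite strict refinement property. -/
def HasFiniteStrictRefinement {C : Type u} [Category.{v} C] (X : C) : Prop :=
  ∀ (I J : Type) (_ : Finite I) (_ : Finite J) (A : I → C) (B : J → C)
    (f : ∀ i, X ⟶ A i) (g : ∀ j, X ⟶ B j),
    Nonempty (IsLimit (Fan.mk X f)) → Nonempty (IsLimit (Fan.mk X g)) →
    ∃ (D : I → J → C) (α : ∀ i j, A i ⟶ D i j) (β : ∀ i j, B j ⟶ D i j),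
      (∀ i j, f i ≫ α i j = g j ≫ β i j) ∧
      (∀ i, Nonempty (IsLimit (Fan.mk (A i) (fun j => α i j)))) ∧
      (∀ j, Nonempty (IsLimit (Fan.mk (B j) (fun i => β i j))))

universe w

/-- `f` is a product diagram, exhibiting `X` as the product of the family `A`: the counterpart of
`IsBinaryProduct` for the families that occur in `HasFiniteStrictRefinement`. -/
def IsProductDiagram {I : Type w} {X : C} {A : I → C} (f : ∀ i, X ⟶ A i) : Prop :=
  Nonempty (IsLimit (Fan.mk X f))

/-- `X` has stable global support: every base change `X ⨯ V ⟶ V` of `X ⟶ 1` is an effective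
epimorphism. Only binary products are needed to say this, and in a regular category it amounts to
global support. -/
def HasStableGlobalSupport [HasBinaryProducts C] (X : C) : Prop :=
  ∀ V : C, EffectiveEpi (prod.snd : X ⨯ V ⟶ V)

namespace IsBinaryProduct

variable {X A B : C} {p : X ⟶ A} {q : X ⟶ B}

theorem exists_lift (h : IsBinaryProduct p q) {T : C} (a : T ⟶ A) (b : T ⟶ B) :
    ∃ l : T ⟶ X, l ≫ p = a ∧ l ≫ q = b :=
  h.elim fun h ↦ ⟨_, (BinaryFan.IsLimit.lift' h a b).2⟩

theorem hom_ext (h : IsBinaryProduct p q) {T : C} {l m : T ⟶ X} (hp : l ≫ p = m ≫ p)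
    (hq : l ≫ q = m ≫ q) : l = m :=
  h.elim fun h ↦ BinaryFan.IsLimit.hom_ext h hp hq

theorem of_exists_lift
    (exists_lift : ∀ {T : C} (a : T ⟶ A) (b : T ⟶ B), ∃ l : T ⟶ X, l ≫ p = a ∧ l ≫ q = b)
    (hom_ext : ∀ {T : C} {l m : T ⟶ X}, l ≫ p = m ≫ p → l ≫ q = m ≫ q → l = m) :
    IsBinaryProduct p q := by
  choose lift hp hq using @exists_lift
  exact ⟨BinaryFan.isLimitMk (fun s ↦ lift s.fst s.snd) (fun s ↦ hp s.fst s.snd)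
    (fun s ↦ hq s.fst s.snd) fun s m hm₁ hm₂ ↦
      hom_ext (hm₁.trans (hp s.fst s.snd).symm) (hm₂.trans (hq s.fst s.snd).symm)⟩

theorem symm (h : IsBinaryProduct p q) : IsBinaryProduct q p :=
  h.elim fun h ↦ ⟨BinaryFan.isLimitFlip h⟩

theorem comp_isIso (h : IsBinaryProduct p q) {A' B' : C} (i : A ⟶ A') (j : B ⟶ B') [IsIso i]
    [IsIso j] : IsBinaryProduct (p ≫ i) (q ≫ j) :=
  h.elim fun h ↦
    ⟨BinaryFan.isLimitCompRightIso _ j (BinaryFan.isLimitCompLeftIso _ i h)⟩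

theorem assoc [HasBinaryProducts C] {A₁ A₂ : C} {π₁ : A ⟶ A₁} {π₂ : A ⟶ A₂}
    (h : IsBinaryProduct p q) (hπ : IsBinaryProduct π₁ π₂) :
    IsBinaryProduct (prod.lift q (p ≫ π₁)) (p ≫ π₂) := by
  refine of_exists_lift (fun a b ↦ ?_) fun {T l m} h₁ h₂ ↦ ?_
  · obtain ⟨y, hy₁, hy₂⟩ := hπ.exists_lift (a ≫ prod.snd) b
    obtain ⟨x, hxp, hxq⟩ := h.exists_lift y (a ≫ prod.fst)
    exact ⟨x, by ext <;> simp [prod.lift_fst, prod.lift_snd, hxq, reassoc_of% hxp, hy₁],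
      by simp [reassoc_of% hxp, hy₂]⟩
  · have hq : l ≫ q = m ≫ q := by simpa [prod.lift_fst] using h₁ =≫ prod.fst
    have hπ₁ : (l ≫ p) ≫ π₁ = (m ≫ p) ≫ π₁ := by simpa [prod.lift_snd] using h₁ =≫ prod.snd
    exact h.hom_ext (hπ.hom_ext hπ₁ (by simpa using h₂)) hq

end IsBinaryProduct

theorem isBinaryProduct_prod [HasBinaryProducts C] (A B : C) :
    IsBinaryProduct (prod.fst : A ⨯ B ⟶ A) prod.snd :=
  ⟨prodIsProd A B⟩

theorem IsProductProjection.of_isIso [HasTerminal C] {X A : C} (p : X ⟶ A) [IsIso p] :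
    IsProductProjection p :=
  ⟨⊤_ C, terminal.from X,
    (BinaryFan.isLimit_iff_isIso_fst terminalIsTerminal (BinaryFan.mk p _)).2 ‹_›⟩

theorem IsProductProjection.comp [HasBinaryProducts C] {X A B : C} {p : X ⟶ A} {q : A ⟶ B}
    (hp : IsProductProjection p) (hq : IsProductProjection q) : IsProductProjection (p ≫ q) := by
  obtain ⟨_, _, hp⟩ := hp
  obtain ⟨_, _, hq⟩ := hq
  exact ⟨_, _, (hp.assoc hq.symm).symm⟩

namespace IsProductDiagram

variable {I : Type w} {X : C} {A : I → C} {f : ∀ i, X ⟶ A i}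

theorem exists_lift (h : IsProductDiagram f) {T : C} (a : ∀ i, T ⟶ A i) :
    ∃ l : T ⟶ X, ∀ i, l ≫ f i = a i :=
  h.elim fun h ↦ ⟨Fan.IsLimit.lift h a, Fan.IsLimit.fac h a⟩

theorem hom_ext (h : IsProductDiagram f) {T : C} {l m : T ⟶ X} (hlm : ∀ i, l ≫ f i = m ≫ f i) :
    l = m :=
  h.elim fun h ↦ Fan.IsLimit.hom_ext h _ _ hlm

theorem of_exists_lift
    (exists_lift : ∀ {T : C} (a : ∀ i, T ⟶ A i), ∃ l : T ⟶ X, ∀ i, l ≫ f i = a i)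
    (hom_ext : ∀ {T : C} {l m : T ⟶ X}, (∀ i, l ≫ f i = m ≫ f i) → l = m) :
    IsProductDiagram f := by
  choose lift hlift using @exists_lift
  exact ⟨Fan.IsLimit.mk _ (fun s ↦ lift s.proj) (fun s ↦ hlift s.proj)
    fun s _ hm ↦ hom_ext fun i ↦ (hm i).trans (hlift s.proj i).symm⟩

theorem of_isEmpty_of_epi [IsEmpty I] (hf : IsProductDiagram f) {Y : C} (m : X ⟶ Y) [Epi m]
    {B : I → C} (b : ∀ i, Y ⟶ B i) : IsProductDiagram b := by
  obtain ⟨s, -⟩ := hf.exists_lift (T := Y) isEmptyElim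
  have hms : m ≫ s = 𝟙 X := hf.hom_ext isEmptyElim
  have hsm : s ≫ m = 𝟙 Y := by rw [← cancel_epi m, reassoc_of% hms, Category.comp_id]
  refine of_exists_lift (fun {T} _ ↦ ?_) fun {T l l'} _ ↦ ?_
  · obtain ⟨l, -⟩ := hf.exists_lift (T := T) isEmptyElim
    exact ⟨l ≫ m, isEmptyElim⟩
  · have hl : l ≫ s = l' ≫ s := hf.hom_ext isEmptyElim
    simpa [hsm] using hl =≫ m

end IsProductDiagram

theorem isProductDiagram_comp_equiv_iff {I : Type w} {J : Type*} (σ : I ≃ J) {X : C} {A : J → C}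
    {f : ∀ j, X ⟶ A j} : IsProductDiagram (fun i ↦ f (σ i)) ↔ IsProductDiagram f :=
  (Fan.isLimitEquivOfEquiv σ (Fan.mk X f)).nonempty_congr.symm

theorem isProductDiagram_walkingPair_iff {X : C} {A : WalkingPair → C} {f : ∀ i, X ⟶ A i} :
    IsProductDiagram f ↔ IsBinaryProduct (f .left) (f .right) := by
  refine ⟨fun h ↦ .of_exists_lift (fun a b ↦ ?_) fun h₁ h₂ ↦
      h.hom_ext (by rintro (_ | _) <;> assumption),
    fun h ↦ .of_exists_lift (fun a ↦ ?_) fun hlm ↦ h.hom_ext (hlm _) (hlm _)⟩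
  · obtain ⟨l, hl⟩ := h.exists_lift fun i ↦ WalkingPair.rec a b i
    exact ⟨l, hl .left, hl .right⟩
  · obtain ⟨l, hl₁, hl₂⟩ := h.exists_lift (a .left) (a .right)
    exact ⟨l, by rintro (_ | _) <;> assumption⟩

theorem isProductDiagram_option_iff {I : Type w} {X R : C} {A : Option I → C}
    {f : ∀ i, X ⟶ A i} {g : X ⟶ R} {r : ∀ i, R ⟶ A (some i)} (hr : IsProductDiagram r)
    (hg : ∀ i, g ≫ r i = f (some i)) :
    IsProductDiagram f ↔ IsBinaryProduct (f none) g := by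
  constructor <;> intro h
  · refine .of_exists_lift (fun a b ↦ ?_) fun h₁ h₂ ↦ h.hom_ext ?_
    · obtain ⟨l, hl⟩ := h.exists_lift fun i ↦ Option.rec a (fun i ↦ b ≫ r i) i
      exact ⟨l, hl none, hr.hom_ext fun i ↦ by rw [Category.assoc, hg, hl (some i)]⟩
    · rintro (_ | i)
      · exact h₁
      · rw [← hg, reassoc_of% h₂]
  · refine .of_exists_lift (fun a ↦ ?_) fun hlm ↦ h.hom_ext (hlm none) (hr.hom_ext fun i ↦ ?_)
    · obtain ⟨b, hb⟩ := hr.exists_lift fun i ↦ a (some i)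
      obtain ⟨l, hl, hlg⟩ := h.exists_lift (a none) b
      refine ⟨l, ?_⟩
      rintro (_ | i)
      · exact hl
      · rw [← hg, reassoc_of% hlg, hb]
    · simpa only [Category.assoc, hg] using hlm (some i)

theorem IsProductDiagram.isProductProjection [HasFiniteProducts C] {I : Type w} [Finite I] {X : C}
    {A : I → C} {f : ∀ i, X ⟶ A i} (h : IsProductDiagram f) (i : I) :
    IsProductProjection (f i) := by
  classical
  exact ⟨_, Pi.lift fun j : {j // j ≠ i} ↦ f j,
    (isProductDiagram_option_iff (f := fun j ↦ f (Equiv.optionSubtypeNe i j))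
      ⟨productIsProduct _⟩ fun j ↦ Pi.lift_π _ j).1
      ((isProductDiagram_comp_equiv_iff (Equiv.optionSubtypeNe i)).2 h)⟩

theorem isMPushout_paste_vert_iff {M : MorphismProperty C} {X A Y Z B D : C}
    {n : X ⟶ Z} {e : X ⟶ A} {s : Z ⟶ B} {π : A ⟶ B} {f : A ⟶ Y} {p : B ⟶ D} {π' : Y ⟶ D}
    (hsq : IsPushout n e s π) (w : π ≫ p = f ≫ π') (hp : M p) (hsp : M (s ≫ p)) :
    IsMPushout M n (e ≫ f) (s ≫ p) π' ↔ IsMPushout M π f p π' :=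
  and_congr (hsq.paste_vert_iff w) (and_congr_left fun _ ↦ iff_of_true hsp hp)

theorem isPushout_epi_comp_iff {X A B Y P : C} (e : X ⟶ A) [Epi e] {p : A ⟶ B} {m : A ⟶ Y}
    {a : B ⟶ P} {b : Y ⟶ P} : IsPushout (e ≫ p) (e ≫ m) a b ↔ IsPushout p m a b := by
  have hsq : IsPushout e (e ≫ m) m (𝟙 Y) := .of_horiz_isIso_epi ⟨by simp⟩
  have paste (w : p ≫ a = m ≫ b) : IsPushout (e ≫ p) (e ≫ m) a b ↔ IsPushout p m a b := by
    simpa using hsq.paste_horiz_iff w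
  exact ⟨fun h ↦ (paste (by simpa [cancel_epi] using h.w)).1 h, fun h ↦ (paste h.w).2 h⟩

namespace HasStableGlobalSupport

variable [HasBinaryProducts C] {X : C}

-- For `W = B ⨯ A`, a map `u` out of `W` that coequalizes the kernel pair of `p : W ⟶ A` restricts
-- along `t` to `X ⨯ A`, and descends from there to `A`.
theorem effectiveEpi_of_isBinaryProduct (hX : HasStableGlobalSupport X) {W A B : C} {q : W ⟶ B}
    {p : W ⟶ A} (h : IsBinaryProduct q p) (t : X ⟶ B) : EffectiveEpi p := by
  obtain ⟨s, -, hsp⟩ := h.exists_lift (prod.fst ≫ t : X ⨯ A ⟶ B) prod.snd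
  have : EffectiveEpi (s ≫ p) := hsp ▸ hX A
  have : Epi p := epi_of_epi s p
  have exists_desc {Z : C} (u : W ⟶ Z)
      (hu : ∀ {T : C} (x y : T ⟶ W), x ≫ p = y ≫ p → x ≫ u = y ≫ u) : ∃ d, p ≫ d = u := by
    have hsu {T : C} (x y : T ⟶ X ⨯ A) (hxy : x ≫ s ≫ p = y ≫ s ≫ p) :
        x ≫ s ≫ u = y ≫ s ≫ u := by
      simpa using hu (x ≫ s) (y ≫ s) (by simpa using hxy)
    refine ⟨EffectiveEpi.desc (s ≫ p) (s ≫ u) hsu, ?_⟩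
    have := hX W
    rw [← cancel_epi (prod.snd : X ⨯ W ⟶ W)]
    have hs : (prod.map (𝟙 X) p ≫ s) ≫ p = prod.snd ≫ p := by simp [hsp]
    calc prod.snd ≫ p ≫ EffectiveEpi.desc (s ≫ p) (s ≫ u) hsu
        = prod.map (𝟙 X) p ≫ (s ≫ p) ≫ EffectiveEpi.desc (s ≫ p) (s ≫ u) hsu := by
          simp only [← Category.assoc, ← hs]
      _ = (prod.map (𝟙 X) p ≫ s) ≫ u := by rw [EffectiveEpi.fac, Category.assoc]
      _ = prod.snd ≫ u := hu _ _ hs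
  choose desc hdesc using @exists_desc
  exact ⟨⟨⟨desc, hdesc, fun u hu m hm ↦ by rw [← cancel_epi p, hm, hdesc]⟩⟩⟩

theorem of_hom (hX : HasStableGlobalSupport X) {Y : C} (t : X ⟶ Y) : HasStableGlobalSupport Y :=
  fun V ↦ hX.effectiveEpi_of_isBinaryProduct (isBinaryProduct_prod Y V) t

theorem effectiveEpi (hX : HasStableGlobalSupport X) {A : C} {p : X ⟶ A}
    (hp : IsProductProjection p) : EffectiveEpi p := by
  obtain ⟨_, q, h⟩ := hp
  exact hX.effectiveEpi_of_isBinaryProduct h.symm q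

theorem isPushout_of_isBinaryProduct (hX : HasStableGlobalSupport X) {A₁ A₂ Y B₁ B₂ : C}
    {π₁ : X ⟶ A₁} {π₂ : X ⟶ A₂} {f : X ⟶ Y} [Epi f] {p₁ : A₁ ⟶ B₁} [EffectiveEpi p₁]
    {p₂ : A₂ ⟶ B₂} {π₁' : Y ⟶ B₁} {π₂' : Y ⟶ B₂}
    (hπ : IsBinaryProduct π₁ π₂) (hπ' : IsBinaryProduct π₁' π₂')
    (w₁ : π₁ ≫ p₁ = f ≫ π₁') (w₂ : π₂ ≫ p₂ = f ≫ π₂') : IsPushout π₁ f p₁ π₁' := by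
  have eq_of_eq {Z : C} {u : A₁ ⟶ Z} {v : Y ⟶ Z} (huv : π₁ ≫ u = f ≫ v) {T : C} (x y : T ⟶ A₁)
      (hxy : x ≫ p₁ = y ≫ p₁) : x ≫ u = y ≫ u := by
    have := hX T
    obtain ⟨x', hx₁, hx₂⟩ := hπ.exists_lift (prod.snd ≫ x : X ⨯ T ⟶ A₁) (prod.fst ≫ π₂)
    obtain ⟨y', hy₁, hy₂⟩ := hπ.exists_lift (prod.snd ≫ y : X ⨯ T ⟶ A₁) (prod.fst ≫ π₂)
    have hf : x' ≫ f = y' ≫ f := hπ'.hom_ext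
      (by simp only [Category.assoc, ← w₁, reassoc_of% hx₁, reassoc_of% hy₁, hxy])
      (by simp only [Category.assoc, ← w₂, reassoc_of% hx₂, reassoc_of% hy₂])
    rw [← cancel_epi (prod.snd : X ⨯ T ⟶ T), ← reassoc_of% hx₁, ← reassoc_of% hy₁, huv,
      reassoc_of% hf]
  refine ⟨⟨w₁⟩, ⟨PushoutCocone.IsColimit.mk w₁
    (fun s ↦ EffectiveEpi.desc p₁ s.inl (eq_of_eq s.condition)) (fun s ↦ EffectiveEpi.fac _ _ _)
    (fun s ↦ ?_) fun s _ hm _ ↦ EffectiveEpi.uniq _ _ _ _ hm⟩⟩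
  rw [← cancel_epi f, ← reassoc_of% w₁, EffectiveEpi.fac, s.condition]

theorem isMPushout_of_isBinaryProduct (hX : HasStableGlobalSupport X) {A₁ A₂ Y B₁ B₂ : C}
    {π₁ : X ⟶ A₁} {π₂ : X ⟶ A₂} {f : X ⟶ Y} {p₁ : A₁ ⟶ B₁} {p₂ : A₂ ⟶ B₂} {π₁' : Y ⟶ B₁}
    {π₂' : Y ⟶ B₂} (hπ : IsBinaryProduct π₁ π₂) (hπ' : IsBinaryProduct π₁' π₂')
    (hf : IsProductProjection f) (hp₁ : IsProductProjection p₁)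
    (w₁ : π₁ ≫ p₁ = f ≫ π₁') (w₂ : π₂ ≫ p₂ = f ≫ π₂') :
    IsMPushout (projections C) π₁ f p₁ π₁' := by
  have := hX.effectiveEpi hf
  have := (hX.of_hom π₁).effectiveEpi hp₁
  exact ⟨hX.isPushout_of_isBinaryProduct hπ hπ' w₁ w₂, hp₁, _, _, hπ'⟩

end HasStableGlobalSupport

namespace HasFiniteStrictRefinement

variable [HasBinaryProducts C] {X : C}

theorem exists_isMPushout (h : HasFiniteStrictRefinement X) (hX : HasStableGlobalSupport X)
    {A₁ A₂ Y Y' : C} {π₁ : X ⟶ A₁} {π₂ : X ⟶ A₂} {f : X ⟶ Y} {f' : X ⟶ Y'}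
    (hπ : IsBinaryProduct π₁ π₂) (hf : IsBinaryProduct f f') :
    ∃ (D₁ D₂ : C) (a₁ : A₁ ⟶ D₁) (a₂ : A₂ ⟶ D₂) (b₁ : Y ⟶ D₁) (b₂ : Y ⟶ D₂),
      IsMPushout (projections C) π₁ f a₁ b₁ ∧ IsMPushout (projections C) π₂ f a₂ b₂ ∧
        IsBinaryProduct b₁ b₂ := by
  obtain ⟨D, α, β, w, hα, hβ⟩ := h WalkingPair WalkingPair inferInstance inferInstance
    (pairFunction A₁ A₂) (pairFunction Y Y') (WalkingPair.rec π₁ π₂) (WalkingPair.rec f f')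
    (isProductDiagram_walkingPair_iff.2 hπ) (isProductDiagram_walkingPair_iff.2 hf)
  have hβ' := isProductDiagram_walkingPair_iff.1 (hβ .left)
  have hα' (i) : IsProductProjection (α i .left) :=
    ⟨_, _, isProductDiagram_walkingPair_iff.1 (hα i)⟩
  exact ⟨_, _, α .left .left, α .right .left, β .left .left, β .right .left,
    hX.isMPushout_of_isBinaryProduct hπ hβ' ⟨_, _, hf⟩ (hα' .left) (w .left .left) (w .right .left),
    hX.isMPushout_of_isBinaryProduct hπ.symm hβ'.symm ⟨_, _, hf⟩ (hα' .right) (w .right .left)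
      (w .left .left), hβ'⟩

theorem projectionCoextensive (h : HasFiniteStrictRefinement X) (hX : HasStableGlobalSupport X) :
    ProjectionCoextensive X where
  pushout_exists := by
    rintro Y A f p ⟨Y', f', hf⟩ ⟨A', p', hp⟩
    obtain ⟨D, -, a, -, b, -, hsq, -⟩ := h.exists_isMPushout hX hp hf
    exact ⟨D, a, b, hsq⟩
  isBinaryProduct_iff := by
    intro A₁ A₂ Y B₁ B₂ π₁ π₂ f p₁ p₂ π₁' π₂' hπ hf hp₁ hp₂ w₁ w₂
    refine ⟨fun hπ' ↦ ⟨hX.isMPushout_of_isBinaryProduct hπ hπ' hf hp₁ w₁ w₂,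
      hX.isMPushout_of_isBinaryProduct hπ.symm hπ'.symm hf hp₂ w₂ w₁⟩, ?_⟩
    rintro ⟨⟨hsq₁, -⟩, ⟨hsq₂, -⟩⟩
    obtain ⟨Y', f', hf⟩ := hf
    obtain ⟨D₁, D₂, a₁, a₂, b₁, b₂, ⟨hD₁, -⟩, ⟨hD₂, -⟩, hb⟩ := h.exists_isMPushout hX hπ hf
    simpa using hb.comp_isIso (hD₁.isoIsPushout _ _ hsq₁).hom (hD₂.isoIsPushout _ _ hsq₂).hom

end HasFiniteStrictRefinement

namespace ProjectionCoextensive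

variable [HasFiniteProducts C] {X : C}

theorem isMPushout (h : ProjectionCoextensive X) {Y A P : C} {p : X ⟶ A} {m : X ⟶ Y}
    {a : A ⟶ P} {b : Y ⟶ P} (hp : IsProductProjection p) (hm : IsProductProjection m)
    (hsq : IsPushout p m a b) : IsMPushout (projections C) p m a b := by
  obtain ⟨Q, a', b', hQ, ha', hb'⟩ := h.pushout_exists m p hm hp
  let i := hQ.isoIsPushout _ _ hsq
  have ha : a' ≫ i.hom = a := by simp [i]
  have hb : b' ≫ i.hom = b := by simp [i]
  exact ⟨hsq, ha ▸ IsProductProjection.comp ha' (.of_isIso i.hom),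
    hb ▸ IsProductProjection.comp hb' (.of_isIso i.hom)⟩

theorem of_isProductProjection (h : ProjectionCoextensive X) (hX : HasStableGlobalSupport X)
    {A : C} {e : X ⟶ A} (he : IsProductProjection e) : ProjectionCoextensive A where
  pushout_exists := by
    intro Y B m p hm hp
    obtain ⟨P, a, b, hsq, hab⟩ := h.pushout_exists (e ≫ m) (e ≫ p) (he.comp hm) (he.comp hp)
    have := hX.effectiveEpi he
    exact ⟨P, a, b, (isPushout_epi_comp_iff e).1 hsq, hab⟩
  isBinaryProduct_iff := by
    intro A₁ A₂ Y B₁ B₂ π₁ π₂ f p₁ p₂ π₁' π₂' hπ hf hp₁ hp₂ w₁ w₂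
    obtain ⟨K, k, hk⟩ := id he
    have hn := hk.assoc hπ
    have hsnd : IsProductProjection (prod.snd : K ⨯ A₁ ⟶ A₁) :=
      ⟨_, _, (isBinaryProduct_prod K A₁).symm⟩
    obtain ⟨⟨hsq₁, -⟩, ⟨hsq₂, -⟩⟩ := (h.isBinaryProduct_iff _ _ e prod.snd (𝟙 A₂) π₁ π₂ hn he hsnd
      (IsProductProjection.of_isIso _) (prod.lift_snd _ _) (Category.comp_id _)).1 hπ
    have hp₁' : IsProductProjection (prod.snd ≫ p₁ : K ⨯ A₁ ⟶ B₁) := hsnd.comp hp₁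
    have hp₂' : IsProductProjection (𝟙 A₂ ≫ p₂) := by rwa [Category.id_comp]
    rw [h.isBinaryProduct_iff _ _ (e ≫ f) (prod.snd ≫ p₁) (𝟙 A₂ ≫ p₂) π₁' π₂' hn (he.comp hf)
      hp₁' hp₂' (by simp [prod.lift_snd_assoc, w₁]) (by simp [w₂]),
      isMPushout_paste_vert_iff hsq₁ w₁ hp₁ hp₁', isMPushout_paste_vert_iff hsq₂ w₂ hp₂ hp₂']

theorem isProductDiagram_of_isPushout {I : Type w} [Finite I] (h : ProjectionCoextensive X)
    (hX : HasStableGlobalSupport X) {Y : C} {m : X ⟶ Y} (hm : IsProductProjection m)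
    {A P : I → C} {f : ∀ i, X ⟶ A i} {a : ∀ i, A i ⟶ P i} {b : ∀ i, Y ⟶ P i}
    (hf : IsProductDiagram f) (hsq : ∀ i, IsPushout (f i) m (a i) (b i)) : IsProductDiagram b := by
  induction I using Finite.induction_empty_option generalizing X Y with
  | of_equiv σ ih =>
    exact (isProductDiagram_comp_equiv_iff σ).1
      (ih h hX hm ((isProductDiagram_comp_equiv_iff σ).2 hf) fun i ↦ hsq (σ i))
  | h_empty =>
    have := hX.effectiveEpi hm
    exact hf.of_isEmpty_of_epi m b
  | @h_option I _ ih =>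
    let π (i : I) : ∏ᶜ (fun i ↦ A (some i)) ⟶ A (some i) := Pi.π _ i
    let q : X ⟶ ∏ᶜ fun i ↦ A (some i) := Pi.lift fun i ↦ f (some i)
    have hπ : IsProductDiagram π := ⟨productIsProduct _⟩
    have hqπ (i) : q ≫ π i = f (some i) := Pi.lift_π _ i
    have hfq : IsBinaryProduct (f none) q := (isProductDiagram_option_iff hπ hqπ).1 hf
    have hq : IsProductProjection q := ⟨_, _, hfq.symm⟩
    obtain ⟨R, a', c, hR⟩ := h.pushout_exists m q hm hq
    have hnone := h.isMPushout ⟨_, _, hfq⟩ hm (hsq none)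
    have hbc : IsBinaryProduct (b none) c :=
      (h.isBinaryProduct_iff _ _ m _ _ _ _ hfq hm hnone.2.1 hR.2.1 hnone.1.w hR.1.w).2 ⟨hnone, hR⟩
    have hsome (i) : IsPushout (q ≫ π i) m (a (some i)) (b (some i)) := by
      rw [hqπ]
      exact hsq (some i)
    have hd := ih (h.of_isProductProjection hX hq) (hX.of_hom q) hR.2.1 hπ
      fun i ↦ (hsome i).of_left' hR.1
    exact (isProductDiagram_option_iff hd fun i ↦ hR.1.inr_desc _ _ _).2 hbc

theorem hasFiniteStrictRefinement (h : ProjectionCoextensive X) (hX : HasStableGlobalSupport X) :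
    HasFiniteStrictRefinement X := by
  intro I J _ _ A B f g hf hg
  have hfp := IsProductDiagram.isProductProjection hf
  have hgp := IsProductDiagram.isProductProjection hg
  choose D α β hD _ using fun i j ↦ h.pushout_exists (g j) (f i) (hgp j) (hfp i)
  exact ⟨D, α, β, fun i j ↦ (hD i j).w,
    fun i ↦ h.isProductDiagram_of_isPushout hX (hfp i) hg fun j ↦ (hD i j).flip,
    fun j ↦ h.isProductDiagram_of_isPushout hX (hgp j) hf fun i ↦ hD i j⟩

end ProjectionCoextensive

theorem IsRegularEpimorphism.effectiveEpi {X Y : C} {f : X ⟶ Y} (h : IsRegularEpimorphism f) :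
    EffectiveEpi f := by
  obtain ⟨W, a, b, w, ⟨hf⟩⟩ := h
  have : IsRegularEpi f := ⟨⟨W, a, b, w, hf⟩⟩
  infer_instance

theorem HasGlobalSupport.hasStableGlobalSupport [HasFiniteLimits C] [IsRegularCategory C] {X : C}
    (hX : HasGlobalSupport X) : HasStableGlobalSupport X := by
  intro V
  let i := (IsPullback.of_hasBinaryProduct' X V).isoPullback
  have : EffectiveEpi (i.inv ≫ prod.snd) := by
    rw [IsPullback.isoPullback_inv_snd]
    exact (IsRegularCategory.regularEpi_stable _ _ hX).effectiveEpi
  exact effectiveEpi_of_effectiveEpi_epi_comp _ i.inv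

theorem finiteStrictRefinement_iff_projectionCoextensive_general [HasFiniteProducts C] {X : C}
    (hX : HasStableGlobalSupport X) : HasFiniteStrictRefinement X ↔ ProjectionCoextensive X :=
  ⟨fun h ↦ h.projectionCoextensive hX, fun h ↦ h.hasFiniteStrictRefinement hX⟩

/-- For an object with global support in a regular category which admits pushouts of
its product projections, the finite strict refinement property is equivalent to
projection-coextensivity. -/
theorem finiteStrictRefinement_iff_projectionCoextensive
    {C : Type u} [Category.{v} C] [HasFiniteLimits C] [IsRegularCategory C]
    (X : C) (hgs : HasGlobalSupport X)
    (hpush : ∀ ⦃A B : C⦄ (p : X ⟶ A) (q : X ⟶ B),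
      IsProductProjection p → IsProductProjection q →
      ∃ (P : C) (a : A ⟶ P) (b : B ⟶ P), IsPushout p q a b) :
    HasFiniteStrictRefinement X ↔ ProjectionCoextensive X := by
  exact finiteStrictRefinement_iff_projectionCoextensive_general hgs.hasStableGlobalSupport
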